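/- If (u, v, θ) is a solution of the RNC system, then for every real number h the scaled triple (ũ, ṽ, θ̃) defined by ũ(x,y) = e^h·u(e^{−h}x, y), ṽ(x,y) = v(e^{−h}x, y), θ̃(x,y) = e^h·θ(e^{−h}x, y) is also a solution of the RNC system (invariance under the one-parameter group g₃ : (x,y,u,v,t) ↦ (x e^h, y, u e^h, v, t e^h) generated by X₃ = x∂ₓ + u∂ᵤ + t∂ₜ, where t denotes the temperature variable θ). -/

import Mathlib

/-- Partial derivative with respect to the first variable `x`. -/
noncomputable def pdx (f : ℝ × ℝ → ℝ) (p : ℝ × ℝ) : ℝ := fderiv ℝ f p (1, 0)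

/-- Partial derivative with respect to the second variable `y`. -/
noncomputable def pdy (f : ℝ × ℝ → ℝ) (p : ℝ × ℝ) : ℝ := fderiv ℝ f p (0, 1)

/-- The RNC system: `(u, v, θ)` are twice continuously differentiable and satisfy
(i) `uₓ + v_y = 0`, (ii) `u uₓ + v u_y = u_yy + Gr θ cos α`,
(iii) `u θₓ + v θ_y = (1/Pr)(1+4R) θ_yy`. -/
def IsRNCSolution (Gr α R Pr : ℝ) (u v θ : ℝ × ℝ → ℝ) : Prop :=
  ContDiff ℝ 2 u ∧ ContDiff ℝ 2 v ∧ ContDiff ℝ 2 θ ∧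
  (∀ p : ℝ × ℝ, pdx u p + pdy v p = 0) ∧
  (∀ p : ℝ × ℝ, u p * pdx u p + v p * pdy u p = pdy (pdy u) p + Gr * θ p * Real.cos α) ∧
  (∀ p : ℝ × ℝ, u p * pdx θ p + v p * pdy θ p = (1 / Pr) * (1 + 4 * R) * pdy (pdy θ) p)

/-- Chain rule for `p ↦ a * f (b * p.1, p.2)`. -/
theorem fderiv_scaled_apply {f : ℝ × ℝ → ℝ} (hf : Differentiable ℝ f) (a b : ℝ)
    (p w : ℝ × ℝ) :
    fderiv ℝ (fun q : ℝ × ℝ => a * f (b * q.1, q.2)) p w =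
      a * fderiv ℝ f (b * p.1, p.2) (b * w.1, w.2) := by
  have hscale : HasFDerivAt (fun q : ℝ × ℝ => (b * q.1, q.2))
      ((b • ContinuousLinearMap.fst ℝ ℝ ℝ).prod (ContinuousLinearMap.snd ℝ ℝ ℝ)) p :=
    (hasFDerivAt_fst.const_mul b).prodMk hasFDerivAt_snd
  have hcomp := (((hf (b * p.1, p.2)).hasFDerivAt).comp p hscale).const_mul a
  have heq := hcomp.fderiv
  simp only [Function.comp_def] at heq
  rw [heq]
  simp

theorem pdx_scaled {f : ℝ × ℝ → ℝ} (hf : Differentiable ℝ f) (a b : ℝ) (p : ℝ × ℝ) :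
    pdx (fun q => a * f (b * q.1, q.2)) p = a * b * pdx f (b * p.1, p.2) := by
  have hsmul : ((b * 1, 0) : ℝ × ℝ) = b • (1, 0) := by simp
  simp only [pdx, fderiv_scaled_apply hf]
  rw [hsmul, map_smul, smul_eq_mul, mul_assoc]

theorem pdy_scaled {f : ℝ × ℝ → ℝ} (hf : Differentiable ℝ f) (a b : ℝ) :
    pdy (fun q => a * f (b * q.1, q.2)) = fun p => a * pdy f (b * p.1, p.2) := by
  funext p
  simp [pdy, fderiv_scaled_apply hf]

theorem differentiable_pdy {f : ℝ × ℝ → ℝ} (hf : ContDiff ℝ 2 f) :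
    Differentiable ℝ (pdy f) :=
  ((hf.fderiv_right (m := 1) (by norm_num)).clm_apply contDiff_const).differentiable (by norm_num)

/-- invariance of the RNC system under the scaling group
`g₃(h) : (x, y, u, v, t) ↦ (x e^h, y, u e^h, v, t e^h)` generated by `X₃ = x∂ₓ + u∂ᵤ + t∂ₜ`. -/
theorem rnc_invariant_under_g3 (Gr α R Pr : ℝ) (hPr : Pr ≠ 0)
    (u v θ : ℝ × ℝ → ℝ) (hsol : IsRNCSolution Gr α R Pr u v θ) (h : ℝ) :
    IsRNCSolution Gr α R Pr
      (fun p => Real.exp h * u (Real.exp (-h) * p.1, p.2))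
      (fun p => v (Real.exp (-h) * p.1, p.2))
      (fun p => Real.exp h * θ (Real.exp (-h) * p.1, p.2)) := by
  obtain ⟨hu, hv, hθ, hcont, hmom, henergy⟩ := hsol
  have hexp : Real.exp h * Real.exp (-h) = 1 := by rw [← Real.exp_add]; simp
  have hscale : ContDiff ℝ 2 fun p : ℝ × ℝ => (Real.exp (-h) * p.1, p.2) := by fun_prop
  have hdu := hu.differentiable two_ne_zero
  have hdv := hv.differentiable two_ne_zero
  have hdθ := hθ.differentiable two_ne_zero
  have hpdyv := pdy_scaled hdv 1 (Real.exp (-h))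
  simp only [one_mul] at hpdyv
  refine ⟨contDiff_const.mul (hu.comp hscale), hv.comp hscale,
    contDiff_const.mul (hθ.comp hscale), fun p => ?_, fun p => ?_, fun p => ?_⟩
  · rw [pdx_scaled hdu, hpdyv, hexp, one_mul]
    exact hcont _
  · rw [pdx_scaled hdu, pdy_scaled hdu, pdy_scaled (differentiable_pdy hu), hexp]
    linear_combination Real.exp h * hmom (Real.exp (-h) * p.1, p.2)
  · rw [pdx_scaled hdθ, pdy_scaled hdθ, pdy_scaled (differentiable_pdy hθ), hexp]
    linear_combination Real.exp h * henergy (Real.exp (-h) * p.1, p.2)
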